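/- Let θ ∈ C²([a,b],ℝ) satisfy θ''(s) + V'(θ(s)) = 0 for all s ∈ [a,b], with V'(θ(a)) ≠ 0, V'(θ(b)) ≠ 0, no s ∈ [a,b] with θ'(s) = 0 and V'(θ(s)) = 0 simultaneously, and assume V' and V'' have no common zero. Assume that the sets {s ∈ [a,b] : θ'(s) = 0}, {s ∈ [a,b] : V'(θ(s)) = 0 and V''(θ(s)) > 0} and {s ∈ [a,b] : V'(θ(s)) = 0 and V''(θ(s)) < 0} are finite, and that θ' vanishes at two or more points of [a,b]. Then there exists a Neumann-admissible perturbation τ with ∫_a^b (τ'(s)² − V''(θ(s))·τ(s)²) ds < 0. -/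

import Mathlib

/-!
The velocity `u = θ'` solves the Jacobi equation `u'' + V''(θ) u = 0`, so the second variation
vanishes on `u` cut off to vanish outside the interval between two zeros `c < d` of `u`. This
competitor has a corner at `d`, because a nontrivial Jacobi field has `u' ≠ 0` at its zeros. Adding
a small multiple of the ramp that grows linearly across `(c, d)` changes the second variation to
first order by `u'(d) (d - c) ≠ 0`, which makes it negative for one sign of the multiple. The
resulting perturbation is constant outside `(c, d)`; smoothing its corners keeps the second
variation negative and produces the Neumann condition at `a` and `b`.
-/

open Set Filter Topology MeasureTheory

theorem exists_seq_continuous_tendsto_indicator_of_isOpen {X : Type*} [TopologicalSpace X]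
    [HasOuterApproxClosed X] {U : Set X} (hU : IsOpen U) :
    ∃ φ : ℕ → X → ℝ, (∀ n, Continuous (φ n)) ∧ (∀ n x, φ n x ∈ Icc 0 1) ∧
      (∀ n, ∀ x ∉ U, φ n x = 0) ∧
      ∀ x, Tendsto (fun n => φ n x) atTop (𝓝 (U.indicator (fun _ => 1) x)) := by
  have hF : IsClosed Uᶜ := hU.isClosed_compl
  refine ⟨fun n x => 1 - hF.apprSeq n x, fun n => ?_, fun n x => ⟨?_, ?_⟩, fun n x hx => ?_,
    fun x => ?_⟩
  · exact continuous_const.sub (NNReal.continuous_coe.comp (hF.apprSeq n).continuous)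
  · exact sub_nonneg.2 (mod_cast HasOuterApproxClosed.apprSeq_apply_le_one hF n x)
  · exact sub_le_self 1 (NNReal.coe_nonneg _)
  · simp [HasOuterApproxClosed.apprSeq_apply_eq_one hF n hx]
  · have h := tendsto_pi_nhds.1 (HasOuterApproxClosed.tendsto_apprSeq hF) x
    convert (NNReal.tendsto_coe.2 h).const_sub 1 using 2
    by_cases hx : x ∈ U <;> simp [hx]

theorem exists_two_mul_mul_add_sq_mul_neg {β : ℝ} (hβ : β ≠ 0) (γ : ℝ) :
    ∃ ε : ℝ, 2 * ε * β + ε ^ 2 * γ < 0 := by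
  have hpos : 0 < 1 + |γ| := by positivity
  refine ⟨-β / (1 + |γ|), ?_⟩
  have factored : 2 * (-β / (1 + |γ|)) * β + (-β / (1 + |γ|)) ^ 2 * γ
      = β ^ 2 / (1 + |γ|) ^ 2 * (γ - 2 * (1 + |γ|)) := by
    field_simp
    ring
  rw [factored]
  exact mul_neg_of_pos_of_neg (by positivity) (by linarith [le_abs_self γ, abs_nonneg γ])

section Interval

variable {E : Type*} [NormedAddCommGroup E]

theorem memLp_indicator_Ioo_of_continuousOn {f : ℝ → E} {c d : ℝ} {r : ENNReal}
    {μ : Measure ℝ} [IsLocallyFiniteMeasure μ] (hf : ContinuousOn f (Icc c d)) :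
    MemLp ((Ioo c d).indicator f) r μ := by
  obtain ⟨M, hM⟩ := isCompact_Icc.exists_bound_of_continuousOn hf
  have : IsFiniteMeasure (μ.restrict (Ioo c d)) := isFiniteMeasure_restrict.2 measure_Ioo_lt_top.ne
  rw [memLp_indicator_iff_restrict measurableSet_Ioo]
  exact .of_bound ((hf.mono Ioo_subset_Icc_self).aestronglyMeasurable measurableSet_Ioo) M
    ((ae_restrict_mem measurableSet_Ioo).mono fun s hs => hM s (Ioo_subset_Icc_self hs))

variable [NormedSpace ℝ E]

theorem integral_indicator_Ioo {a b c d : ℝ} (hac : a ≤ c) (hcd : c ≤ d) (hdb : d ≤ b)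
    (f : ℝ → E) : ∫ s in a..b, (Ioo c d).indicator f s = ∫ s in c..d, f s := by
  rw [intervalIntegral.integral_of_le (hac.trans (hcd.trans hdb)),
    setIntegral_indicator measurableSet_Ioo,
    inter_eq_right.2 (Ioo_subset_Ioc_self.trans (Ioc_subset_Ioc hac hdb)),
    intervalIntegral.integral_of_le hcd, integral_Ioc_eq_integral_Ioo]

theorem integral_eq_sub_of_hasDerivWithinAt_Icc [CompleteSpace E] {f f' : ℝ → E} {a b : ℝ}
    (hab : a ≤ b) (hf : ∀ s ∈ Icc a b, HasDerivWithinAt f (f' s) (Icc a b) s)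
    (hf' : IntervalIntegrable f' volume a b) : ∫ s in a..b, f' s = f b - f a :=
  intervalIntegral.integral_eq_sub_of_hasDerivAt_of_le hab
    (fun s hs => (hf s hs).continuousWithinAt)
    (fun s hs => (hf s (Ioo_subset_Icc_self hs)).hasDerivAt (Icc_mem_nhds hs.1 hs.2)) hf'

theorem integral_indicator_Ioo_eq_indicator [CompleteSpace E] {u p : ℝ → E} {c d : ℝ}
    (hcd : c ≤ d) (hu : ∀ s ∈ Icc c d, HasDerivWithinAt u (p s) (Icc c d) s)
    (hp : ContinuousOn p (Icc c d)) (huc : u c = 0) (hud : u d = 0) (s : ℝ) :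
    ∫ t in c..s, (Ioo c d).indicator p t = (Ioo c d).indicator u s := by
  rcases le_or_gt s c with hsc | hcs
  · have hzero : EqOn ((Ioo c d).indicator p) (fun _ => 0) (uIcc c s) := fun t ht =>
      indicator_of_notMem (fun h => h.1.not_ge (uIcc_of_ge hsc ▸ ht).2) p
    rw [intervalIntegral.integral_congr hzero, indicator_of_notMem (fun h => h.1.not_ge hsc)]
    exact intervalIntegral.integral_zero
  rcases lt_or_ge s d with hsd | hds
  · have hsub : Icc c s ⊆ Icc c d := Icc_subset_Icc_right hsd.le
    rw [indicator_of_mem (show s ∈ Ioo c d from ⟨hcs, hsd⟩),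
      intervalIntegral.integral_congr_Ioo_of_le hcs.le (g := p)
        fun t ht => indicator_of_mem (show t ∈ Ioo c d from ⟨ht.1, ht.2.trans hsd⟩) p,
      integral_eq_sub_of_hasDerivWithinAt_Icc hcs.le (fun t ht => (hu t (hsub ht)).mono hsub)
        ((hp.mono hsub).intervalIntegrable_of_Icc hcs.le), huc, sub_zero]
  · rw [integral_indicator_Ioo le_rfl hcd hds, indicator_of_notMem (fun h => h.2.not_ge hds),
      integral_eq_sub_of_hasDerivWithinAt_Icc hcd hu (hp.intervalIntegrable_of_Icc hcd),
      huc, hud, sub_zero]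

end Interval

/-- The index form `∫ (τ' σ' - q τ σ)` over `[a, b]`, written in terms of the derivatives `v = τ'`
and `w = σ'` of perturbations vanishing at `c`. In this encoding a corner of a perturbation is just
a jump of its derivative. -/
noncomputable def indexForm (q : ℝ → ℝ) (a b c : ℝ) (v w : ℝ → ℝ) : ℝ :=
  ∫ s in a..b, (v s * w s - q s * ((∫ t in c..s, v t) * ∫ t in c..s, w t))

/-- Instability under Neumann conditions: some Neumann-admissible `τ` makes the second variation
`∫ (τ'² - q τ²)` over `[a, b]` negative. At the endpoints `τ'` is a two-sided derivative. -/
def NeumannUnstable (q : ℝ → ℝ) (a b : ℝ) : Prop :=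
  ∃ τ τ' : ℝ → ℝ,
    (∀ s ∈ Icc a b, HasDerivAt τ (τ' s) s) ∧
    ContinuousOn τ' (Icc a b) ∧
    (∃ s ∈ Icc a b, τ s ≠ 0) ∧
    τ' a = 0 ∧ τ' b = 0 ∧
    (∫ s in a..b, (τ' s ^ 2 - q s * τ s ^ 2)) < 0

section IndexForm

variable {q v w : ℝ → ℝ} {a b c d : ℝ}

theorem intervalIntegrable_of_memLp_two (hab : a ≤ b)
    (hw : MemLp w 2 (volume.restrict (Ioc a b))) : IntervalIntegrable w volume a b :=
  (intervalIntegrable_iff_integrableOn_Ioc_of_le hab).2 (hw.integrable one_le_two)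

theorem intervalIntegrable_indexForm (hc : c ∈ Icc a b) (hq : IntervalIntegrable q volume a b)
    (hv : MemLp v 2 (volume.restrict (Ioc a b))) (hw : MemLp w 2 (volume.restrict (Ioc a b))) :
    IntervalIntegrable (fun s => v s * w s - q s * ((∫ t in c..s, v t) * ∫ t in c..s, w t))
      volume a b := by
  have hab : a ≤ b := hc.1.trans hc.2
  have hprim {f : ℝ → ℝ} (hf : MemLp f 2 (volume.restrict (Ioc a b))) :
      ContinuousOn (fun s => ∫ t in c..s, f t) (uIcc a b) :=
    intervalIntegral.continuousOn_primitive_interval' (intervalIntegrable_of_memLp_two hab hf)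
      (uIcc_of_le hab ▸ hc)
  have hvw : IntervalIntegrable (fun s => v s * w s) volume a b :=
    (intervalIntegrable_iff_integrableOn_Ioc_of_le hab).2 (hv.integrable_mul hw)
  exact hvw.sub (hq.mul_continuousOn ((hprim hv).mul (hprim hw)))

theorem indexForm_add_const_mul_self (hc : c ∈ Icc a b) (hq : IntervalIntegrable q volume a b)
    (hv : MemLp v 2 (volume.restrict (Ioc a b))) (hw : MemLp w 2 (volume.restrict (Ioc a b)))
    (ε : ℝ) :
    indexForm q a b c (fun s => v s + ε * w s) (fun s => v s + ε * w s) =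
      indexForm q a b c v v + 2 * ε * indexForm q a b c v w + ε ^ 2 * indexForm q a b c w w := by
  have hab : a ≤ b := hc.1.trans hc.2
  have hprim : ∀ s ∈ Icc a b,
      ∫ t in c..s, (v t + ε * w t) = (∫ t in c..s, v t) + ε * ∫ t in c..s, w t := fun s hs => by
    have hsub : uIcc c s ⊆ uIcc a b := by
      rw [uIcc_of_le hab]
      exact ordConnected_Icc.uIcc_subset hc hs
    rw [intervalIntegral.integral_add ((intervalIntegrable_of_memLp_two hab hv).mono_set hsub)
      (((intervalIntegrable_of_memLp_two hab hw).mono_set hsub).const_mul ε),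
      intervalIntegral.integral_const_mul]
  have hvv := intervalIntegrable_indexForm hc hq hv hv
  have hvw := (intervalIntegrable_indexForm hc hq hv hw).const_mul (2 * ε)
  have hww := (intervalIntegrable_indexForm hc hq hw hw).const_mul (ε ^ 2)
  simp only [indexForm]
  rw [← intervalIntegral.integral_const_mul, ← intervalIntegral.integral_const_mul,
    ← intervalIntegral.integral_add hvv hvw, ← intervalIntegral.integral_add (hvv.add hvw) hww]
  refine intervalIntegral.integral_congr fun s hs => ?_
  simp only [hprim s (uIcc_of_le hab ▸ hs)]
  ring

theorem tendsto_indexForm_self_of_bounded {M : ℝ} {g : ℕ → ℝ → ℝ} (hc : c ∈ Icc a b)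
    (hq : IntervalIntegrable q volume a b) (hg : ∀ n, Continuous (g n))
    (hM : ∀ n, ∀ s ∈ Icc a b, ‖g n s‖ ≤ M)
    (hlim : ∀ s ∈ Icc a b, Tendsto (fun n => g n s) atTop (𝓝 (w s))) :
    Tendsto (fun n => indexForm q a b c (g n) (g n)) atTop (𝓝 (indexForm q a b c w w)) := by
  have hab : a ≤ b := hc.1.trans hc.2
  have hsub {s : ℝ} (hs : s ∈ Icc a b) : uIoc c s ⊆ Icc a b :=
    uIoc_subset_uIcc.trans (ordConnected_Icc.uIcc_subset hc hs)
  have hprim_cont (n : ℕ) : Continuous fun s => ∫ t in c..s, g n t :=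
    intervalIntegral.continuous_primitive (fun _ _ => (hg n).intervalIntegrable _ _) c
  have hM₀ : 0 ≤ M := (norm_nonneg _).trans (hM 0 c hc)
  have hprim_le (n : ℕ) {s : ℝ} (hs : s ∈ Icc a b) : ‖∫ t in c..s, g n t‖ ≤ M * (b - a) :=
    calc ‖∫ t in c..s, g n t‖ ≤ M * |s - c| :=
          intervalIntegral.norm_integral_le_of_norm_le_const fun t ht => hM n t (hsub hs ht)
      _ ≤ M * (b - a) := by
          gcongr
          exact abs_sub_le_of_le_of_le hs.1 hs.2 hc.1 hc.2
  have hprim_lim {s : ℝ} (hs : s ∈ Icc a b) :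
      Tendsto (fun n => ∫ t in c..s, g n t) atTop (𝓝 (∫ t in c..s, w t)) :=
    intervalIntegral.tendsto_integral_filter_of_dominated_convergence (fun _ => M)
      (.of_forall fun n => (hg n).aestronglyMeasurable)
      (.of_forall fun n => .of_forall fun t ht => hM n t (hsub hs ht))
      intervalIntegrable_const (.of_forall fun t ht => hlim t (hsub hs ht))
  have hIcc {s : ℝ} (hs : s ∈ uIoc a b) : s ∈ Icc a b :=
    Ioc_subset_Icc_self (uIoc_of_le hab ▸ hs)
  refine intervalIntegral.tendsto_integral_filter_of_dominated_convergence
    (fun s => M * M + ‖q s‖ * (M * (b - a) * (M * (b - a)))) (.of_forall fun n => ?_)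
    (.of_forall fun n => .of_forall fun s hs => ?_) ?_ (.of_forall fun s hs => ?_)
  · exact ((hg n).mul (hg n)).aestronglyMeasurable.sub
      (hq.def'.aestronglyMeasurable.mul
        ((hprim_cont n).mul (hprim_cont n)).aestronglyMeasurable)
  · refine (norm_sub_le _ _).trans ?_
    simp only [norm_mul]
    have hg_le := hM n s (hIcc hs)
    have hG_le := hprim_le n (hIcc hs)
    gcongr
  · exact intervalIntegrable_const.add (hq.norm.mul_const _)
  · exact ((hlim s (hIcc hs)).mul (hlim s (hIcc hs))).sub
      (((hprim_lim (hIcc hs)).mul (hprim_lim (hIcc hs))).const_mul (q s))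

theorem exists_continuous_indexForm_neg_of_indicator {U : Set ℝ} {f : ℝ → ℝ} (hc : c ∈ Icc a b)
    (hq : IntervalIntegrable q volume a b) (hU : IsOpen U) (hUab : U ⊆ Ioo a b)
    (hf : ContinuousOn f (Icc a b))
    (hneg : indexForm q a b c (U.indicator f) (U.indicator f) < 0) :
    ∃ g : ℝ → ℝ, Continuous g ∧ g a = 0 ∧ g b = 0 ∧ indexForm q a b c g g < 0 := by
  obtain ⟨φ, hφ_cont, hφ_mem, hφ_zero, hφ_lim⟩ :=
    exists_seq_continuous_tendsto_indicator_of_isOpen hU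
  obtain ⟨M, hM⟩ := isCompact_Icc.exists_bound_of_continuousOn hf
  have hab : a ≤ b := hc.1.trans hc.2
  have hf_ext : Continuous (IccExtend hab ((Icc a b).domRestrict f)) :=
    hf.domRestrict.Icc_extend'
  have hf_eq : ∀ s ∈ Icc a b, IccExtend hab ((Icc a b).domRestrict f) s = f s := fun s hs =>
    IccExtend_of_mem hab _ hs
  set F := IccExtend hab ((Icc a b).domRestrict f)
  have hlim := tendsto_indexForm_self_of_bounded (M := M) (g := fun n s => φ n s * F s)
    (w := U.indicator f) hc hq (fun n => (hφ_cont n).mul hf_ext)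
    (fun n s hs => by
      rw [norm_mul, hf_eq s hs, Real.norm_of_nonneg (hφ_mem n s).1]
      exact (mul_le_of_le_one_left (norm_nonneg _) (hφ_mem n s).2).trans (hM s hs))
    (fun s hs => by
      convert (hφ_lim s).mul_const (F s) using 2
      by_cases hsU : s ∈ U <;> simp [hsU, hf_eq s hs])
  obtain ⟨n, hn⟩ := (hlim.eventually_lt_const hneg).exists
  refine ⟨fun s => φ n s * F s, (hφ_cont n).mul hf_ext, ?_, ?_, hn⟩
  · simp only [hφ_zero n a fun h => (hUab h).1.false, zero_mul]
  · simp only [hφ_zero n b fun h => (hUab h).2.false, zero_mul]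

theorem neumannUnstable_of_indexForm_neg {g : ℝ → ℝ} (hab : a ≤ b) (hg : Continuous g)
    (hga : g a = 0) (hgb : g b = 0) (hneg : indexForm q a b c g g < 0) : NeumannUnstable q a b := by
  simp only [indexForm, ← sq] at hneg
  refine ⟨fun s => ∫ t in c..s, g t, g, fun s _ => hg.integral_hasStrictDerivAt c s |>.hasDerivAt,
    hg.continuousOn, ?_, hga, hgb, hneg⟩
  by_contra! hzero
  refine hneg.not_ge (intervalIntegral.integral_nonneg hab fun s hs => ?_)
  rw [hzero s hs]
  simpa using sq_nonneg (g s)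

end IndexForm

section JacobiField

variable {q u p : ℝ → ℝ} {a b c d : ℝ}

theorem lipschitzWith_jacobi_system {k : ℝ} {K : NNReal} (hk : |k| ≤ K) :
    LipschitzWith (max 1 K) fun x : ℝ × ℝ => (x.2, -(k * x.1)) := by
  refine LipschitzWith.prod_snd.prodMk (LipschitzWith.of_dist_le_mul fun x y => ?_)
  calc dist (-(k * x.1)) (-(k * y.1)) = |k| * dist x.1 y.1 := by
        rw [dist_neg_neg, Real.dist_eq, Real.dist_eq, ← mul_sub, abs_mul]
    _ ≤ K * dist x y := by
        gcongr
        exact le_max_left _ _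

theorem jacobiField_eqOn_zero (hq : ContinuousOn q (Icc a b))
    (hu : ∀ s ∈ Icc a b, HasDerivWithinAt u (p s) (Icc a b) s)
    (hp : ∀ s ∈ Icc a b, HasDerivWithinAt p (-(q s * u s)) (Icc a b) s)
    (hd : d ∈ Icc a b) (hud : u d = 0) (hpd : p d = 0) : EqOn u 0 (Icc a b) := by
  obtain ⟨K, hK⟩ := isCompact_Icc.exists_bound_of_continuousOn hq
  let field : ℝ → ℝ × ℝ → ℝ × ℝ := fun s x => (x.2, -(q s * x.1))
  have hlip : ∀ s ∈ Icc a b, LipschitzOnWith (max 1 K.toNNReal) (field s) univ := fun s hs =>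
    (lipschitzWith_jacobi_system ((hK s hs).trans (Real.le_coe_toNNReal K))).lipschitzOnWith
  have hsol : ∀ s ∈ Icc a b, HasDerivWithinAt (fun s => (u s, p s)) (field s (u s, p s))
      (Icc a b) s := fun s hs => (hu s hs).prodMk (hp s hs)
  have hzero (S : Set ℝ) (s : ℝ) : HasDerivWithinAt (0 : ℝ → ℝ × ℝ) (field s 0) S s :=
    (hasDerivWithinAt_const s S (0 : ℝ × ℝ)).congr_deriv
      (by simp [field, Prod.ext_iff])
  have hcont : ContinuousOn (fun s => (u s, p s)) (Icc a b) := fun s hs =>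
    (hsol s hs).continuousWithinAt
  have hleft : EqOn (fun s => (u s, p s)) 0 (Icc a d) :=
    ODE_solution_unique_of_mem_Icc_left (v := field) (s := fun _ => univ)
      (fun s hs => hlip s ⟨hs.1.le, hs.2.trans hd.2⟩) (hcont.mono (Icc_subset_Icc_right hd.2))
      (fun s hs => (hsol s ⟨hs.1.le, hs.2.trans hd.2⟩).mono_of_mem_nhdsWithin
        (Icc_mem_nhdsLE_of_mem ⟨hs.1, hs.2.trans hd.2⟩))
      (fun _ _ => mem_univ _) continuousOn_const (fun s _ => hzero _ s) (fun _ _ => mem_univ _)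
      (by simp [hud, hpd])
  have hright : EqOn (fun s => (u s, p s)) 0 (Icc d b) :=
    ODE_solution_unique_of_mem_Icc_right (v := field) (s := fun _ => univ)
      (fun s hs => hlip s ⟨hd.1.trans hs.1, hs.2.le⟩) (hcont.mono (Icc_subset_Icc_left hd.1))
      (fun s hs => (hsol s ⟨hd.1.trans hs.1, hs.2.le⟩).mono_of_mem_nhdsWithin
        (Icc_mem_nhdsGE_of_mem ⟨hd.1.trans hs.1, hs.2⟩))
      (fun _ _ => mem_univ _) continuousOn_const (fun s _ => hzero _ s) (fun _ _ => mem_univ _)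
      (by simp [hud, hpd])
  intro s hs
  rcases le_total s d with hsd | hds
  · exact congrArg Prod.fst (hleft ⟨hs.1, hsd⟩)
  · exact congrArg Prod.fst (hright ⟨hds, hs.2⟩)

theorem integral_jacobiField_mul_eq {w : ℝ → ℝ} (hcd : c ≤ d) (hq : ContinuousOn q (Icc c d))
    (hu : ContinuousOn u (Icc c d))
    (hp : ∀ s ∈ Icc c d, HasDerivWithinAt p (-(q s * u s)) (Icc c d) s)
    (hw : ContinuousOn w (Ioo c d)) (hwi : IntervalIntegrable w volume c d) :
    ∫ s in c..d, (p s * w s - q s * (u s * ∫ t in c..s, w t)) = p d * ∫ t in c..d, w t := by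
  have hp_cont : ContinuousOn p (Icc c d) := fun s hs => (hp s hs).continuousWithinAt
  have hW_cont : ContinuousOn (fun s => ∫ t in c..s, w t) (Icc c d) :=
    uIcc_of_le hcd ▸ intervalIntegral.continuousOn_primitive_interval' hwi left_mem_uIcc
  have hderiv : ∀ s ∈ Ioo c d, HasDerivAt (fun s => p s * ∫ t in c..s, w t)
      (p s * w s - q s * (u s * ∫ t in c..s, w t)) s := fun s hs => by
    have hW : HasDerivAt (fun s => ∫ t in c..s, w t) (w s) s :=
      intervalIntegral.integral_hasDerivAt_right
        (hwi.mono_set (uIcc_subset_uIcc_left (uIcc_of_le hcd ▸ Ioo_subset_Icc_self hs)))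
        (hw.stronglyMeasurableAtFilter isOpen_Ioo s hs) (hw.continuousAt (isOpen_Ioo.mem_nhds hs))
    have hp' := (hp s (Ioo_subset_Icc_self hs)).hasDerivAt (Icc_mem_nhds hs.1 hs.2)
    exact (hp'.mul hW).congr_deriv (by ring)
  have hint : IntervalIntegrable (fun s => p s * w s - q s * (u s * ∫ t in c..s, w t))
      volume c d :=
    (hwi.continuousOn_mul (uIcc_of_le hcd ▸ hp_cont)).sub
      ((hq.mul (hu.mul hW_cont)).intervalIntegrable_of_Icc hcd)
  rw [intervalIntegral.integral_eq_sub_of_hasDerivAt_of_le hcd (hp_cont.fun_mul hW_cont) hderiv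
    hint, intervalIntegral.integral_same, mul_zero, sub_zero]

theorem indexForm_indicator_jacobiField {w : ℝ → ℝ} (hac : a ≤ c) (hcd : c ≤ d) (hdb : d ≤ b)
    (hq : ContinuousOn q (Icc c d))
    (hu : ∀ s ∈ Icc c d, HasDerivWithinAt u (p s) (Icc c d) s)
    (hp : ∀ s ∈ Icc c d, HasDerivWithinAt p (-(q s * u s)) (Icc c d) s)
    (huc : u c = 0) (hud : u d = 0)
    (hw : ContinuousOn w (Ioo c d)) (hwi : IntervalIntegrable w volume c d) :
    indexForm q a b c ((Ioo c d).indicator p) w = p d * ∫ t in c..d, w t := by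
  have hprim := integral_indicator_Ioo_eq_indicator hcd hu
    (fun s hs => (hp s hs).continuousWithinAt) huc hud
  have hintegrand (s : ℝ) :
      (Ioo c d).indicator p s * w s - q s * ((Ioo c d).indicator u s * ∫ t in c..s, w t) =
        (Ioo c d).indicator (fun s => p s * w s - q s * (u s * ∫ t in c..s, w t)) s := by
    by_cases hs : s ∈ Ioo c d <;> simp [hs]
  simp only [indexForm, hprim, hintegrand]
  rw [integral_indicator_Ioo hac hcd hdb, integral_jacobiField_mul_eq hcd hq
    (fun s hs => (hu s hs).continuousWithinAt) hp hw hwi]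

theorem exists_indexForm_indicator_jacobiField_add_const_neg (hac : a ≤ c) (hcd : c < d)
    (hdb : d ≤ b) (hq : ContinuousOn q (Icc a b))
    (hu : ∀ s ∈ Icc a b, HasDerivWithinAt u (p s) (Icc a b) s)
    (hp : ∀ s ∈ Icc a b, HasDerivWithinAt p (-(q s * u s)) (Icc a b) s)
    (huc : u c = 0) (hud : u d = 0) (hpd : p d ≠ 0) :
    ∃ ε : ℝ, indexForm q a b c ((Ioo c d).indicator fun s => p s + ε)
      ((Ioo c d).indicator fun s => p s + ε) < 0 := by
  have hsub : Icc c d ⊆ Icc a b := Icc_subset_Icc hac hdb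
  have hp_cont : ContinuousOn p (Icc c d) := fun s hs =>
    (hp s (hsub hs)).continuousWithinAt.mono hsub
  let v : ℝ → ℝ := (Ioo c d).indicator p
  let w : ℝ → ℝ := (Ioo c d).indicator fun _ => 1
  have hvw (f : ℝ → ℝ) (hf : ContinuousOn f (Icc c d)) :
      indexForm q a b c v ((Ioo c d).indicator f) = p d * ∫ t in c..d, f t := by
    rw [← integral_indicator_Ioo le_rfl hcd.le le_rfl f]
    exact indexForm_indicator_jacobiField hac hcd.le hdb (hq.mono hsub)
      (fun s hs => (hu s (hsub hs)).mono hsub) (fun s hs => (hp s (hsub hs)).mono hsub) huc hud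
      ((hf.mono Ioo_subset_Icc_self).congr fun s hs => indicator_of_mem hs f)
      (intervalIntegrable_of_memLp_two hcd.le (memLp_indicator_Ioo_of_continuousOn hf))
  have hvv : indexForm q a b c v v = 0 := by
    rw [hvw p hp_cont, integral_eq_sub_of_hasDerivWithinAt_Icc hcd.le
      (fun s hs => (hu s (hsub hs)).mono hsub) (hp_cont.intervalIntegrable_of_Icc hcd.le), huc, hud,
      sub_zero, mul_zero]
  have hvw_ne : indexForm q a b c v w ≠ 0 := by
    rw [hvw _ continuousOn_const, intervalIntegral.integral_const, smul_eq_mul, mul_one]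
    exact mul_ne_zero hpd (sub_pos.2 hcd).ne'
  obtain ⟨ε, hε⟩ := exists_two_mul_mul_add_sq_mul_neg hvw_ne (indexForm q a b c w w)
  have hsum : ((Ioo c d).indicator fun s => p s + ε) = fun s => v s + ε * w s := by
    ext s
    by_cases hs : s ∈ Ioo c d <;> simp [v, w, hs]
  refine ⟨ε, ?_⟩
  rw [hsum, indexForm_add_const_mul_self ⟨hac, hcd.le.trans hdb⟩
    (hq.intervalIntegrable_of_Icc (hac.trans (hcd.le.trans hdb)))
    (memLp_indicator_Ioo_of_continuousOn hp_cont)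
    (memLp_indicator_Ioo_of_continuousOn continuousOn_const), hvv, zero_add]
  exact hε

theorem neumannUnstable_of_jacobiField (hcd : c < d) (hc : c ∈ Icc a b) (hd : d ∈ Icc a b)
    (hq : ContinuousOn q (Icc a b))
    (hu : ∀ s ∈ Icc a b, HasDerivWithinAt u (p s) (Icc a b) s)
    (hp : ∀ s ∈ Icc a b, HasDerivWithinAt p (-(q s * u s)) (Icc a b) s)
    (hu_ne : ∃ s ∈ Icc a b, u s ≠ 0) (huc : u c = 0) (hud : u d = 0) : NeumannUnstable q a b := by
  have hab : a ≤ b := hc.1.trans hc.2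
  have hpd : p d ≠ 0 := fun hpd =>
    let ⟨s, hs, hus⟩ := hu_ne
    hus (jacobiField_eqOn_zero hq hu hp hd hud hpd hs)
  obtain ⟨ε, hε⟩ :=
    exists_indexForm_indicator_jacobiField_add_const_neg hc.1 hcd hd.2 hq hu hp huc hud hpd
  obtain ⟨g, hg, hga, hgb, hneg⟩ := exists_continuous_indexForm_neg_of_indicator hc
    (hq.intervalIntegrable_of_Icc hab) isOpen_Ioo (Ioo_subset_Ioo hc.1 hd.2)
    (f := fun s => p s + ε) (fun s hs => (hp s hs).continuousWithinAt.add_const ε) hε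
  exact neumannUnstable_of_indexForm_neg hab hg hga hgb hneg

end JacobiField

theorem stmt_17_general {a b : ℝ} {V : ℝ → ℝ} (hV : ContDiff ℝ 2 V) {θ θ' : ℝ → ℝ}
    (hθ : ∀ s ∈ Icc a b, HasDerivWithinAt θ (θ' s) (Icc a b) s)
    (hθ' : ∀ s ∈ Icc a b, HasDerivWithinAt θ' (-deriv V (θ s)) (Icc a b) s)
    (hθ_ne : ∃ s ∈ Icc a b, θ' s ≠ 0) {s₁ s₂ : ℝ} (hs₁ : s₁ ∈ Icc a b) (hs₂ : s₂ ∈ Icc a b)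
    (hne : s₁ ≠ s₂) (hz₁ : θ' s₁ = 0) (hz₂ : θ' s₂ = 0) :
    ∃ τ τ' : ℝ → ℝ,
      (∀ s ∈ Icc a b, HasDerivAt τ (τ' s) s) ∧
      ContinuousOn τ' (Icc a b) ∧
      (∃ s ∈ Icc a b, τ s ≠ 0) ∧
      τ' a = 0 ∧ τ' b = 0 ∧
      (∫ s in a..b, (τ' s ^ 2 - deriv (deriv V) (θ s) * τ s ^ 2)) < 0 := by
  have hV' : ContDiff ℝ 1 (deriv V) := hV.deriv'
  have hq : ContinuousOn (fun s => deriv (deriv V) (θ s)) (Icc a b) :=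
    (hV'.continuous_deriv le_rfl).comp_continuousOn fun s hs => (hθ s hs).continuousWithinAt
  have hjacobi : ∀ s ∈ Icc a b, HasDerivWithinAt (fun s => -deriv V (θ s))
      (-(deriv (deriv V) (θ s) * θ' s)) (Icc a b) s := fun s hs =>
    ((hV'.differentiable one_ne_zero (θ s)).hasDerivAt.comp_hasDerivWithinAt s (hθ s hs)).neg
  rcases hne.lt_or_gt with hlt | hgt
  · exact neumannUnstable_of_jacobiField hlt hs₁ hs₂ hq hθ' hjacobi hθ_ne hz₁ hz₂
  · exact neumannUnstable_of_jacobiField hgt hs₂ hs₁ hq hθ' hjacobi hθ_ne hz₂ hz₁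

theorem stmt_17 (a b : ℝ) (hab : a < b) (V : ℝ → ℝ) (hV : ContDiff ℝ 2 V)
    (θ θ' θ'' : ℝ → ℝ)
    (hθ1 : ∀ s ∈ Set.Icc a b, HasDerivAt θ (θ' s) s)
    (hθ2 : ∀ s ∈ Set.Icc a b, HasDerivAt θ' (θ'' s) s)
    (hθc : ContinuousOn θ'' (Set.Icc a b))
    (hEL : ∀ s ∈ Set.Icc a b, θ'' s + deriv V (θ s) = 0)
    (hVa : deriv V (θ a) ≠ 0) (hVb : deriv V (θ b) ≠ 0)
    (hnosim : ∀ s ∈ Set.Icc a b, ¬(θ' s = 0 ∧ deriv V (θ s) = 0))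
    (hVnodeg : ∀ x : ℝ, ¬(deriv V x = 0 ∧ deriv (deriv V) x = 0))
    (hZh : {s : ℝ | s ∈ Set.Icc a b ∧ θ' s = 0}.Finite)
    (hZm : {s : ℝ | s ∈ Set.Icc a b ∧ deriv V (θ s) = 0 ∧
      0 < deriv (deriv V) (θ s)}.Finite)
    (hZM : {s : ℝ | s ∈ Set.Icc a b ∧ deriv V (θ s) = 0 ∧
      deriv (deriv V) (θ s) < 0}.Finite)
    (s₁ s₂ : ℝ) (hs₁ : s₁ ∈ Set.Icc a b) (hs₂ : s₂ ∈ Set.Icc a b)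
    (hne : s₁ ≠ s₂) (hz₁ : θ' s₁ = 0) (hz₂ : θ' s₂ = 0) :
    ∃ τ τ' : ℝ → ℝ,
      (∀ s ∈ Set.Icc a b, HasDerivAt τ (τ' s) s) ∧
      ContinuousOn τ' (Set.Icc a b) ∧
      (∃ s ∈ Set.Icc a b, τ s ≠ 0) ∧
      τ' a = 0 ∧ τ' b = 0 ∧
      (∫ s in a..b, (τ' s ^ 2 - deriv (deriv V) (θ s) * τ s ^ 2)) < 0 := by
  refine stmt_17_general hV (fun s hs => (hθ1 s hs).hasDerivWithinAt)
    (fun s hs => eq_neg_of_add_eq_zero_left (hEL s hs) ▸ (hθ2 s hs).hasDerivWithinAt)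
    ?_ hs₁ hs₂ hne hz₁ hz₂
  by_contra! hconst
  exact Set.Icc_infinite hab (hZh.subset fun s hs => ⟨hs, hconst s hs⟩)
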